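/- Let L = ⊕_{i∈ℤ} L_i be a ℤ-graded Lie conformal algebra, let S ⊆ ℤ, and set 𝒮 = ⊕_{i∈S} L_i and 𝒮⊥ = ⊕_{i∉S} L_i. If [𝒮_λ 𝒮⊥] ⊆ 𝒮⊥, then 𝒮⊥ + [𝒮⊥_λ 𝒮⊥] is an ideal of L. If moreover L is simple graded and 𝒮⊥ ≠ 0, then L = 𝒮⊥ + [𝒮⊥_λ 𝒮⊥] and 𝒮 ⊆ [𝒮⊥_λ 𝒮⊥]. -/

import Mathlib

open scoped BigOperators Classical ENNReal
open Polynomial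

noncomputable section

/-- A Lie conformal algebra over `ℂ`, encoded via its `n`-th products
`a_(n) b` and the operator `∂ = D`.  The `λ`-bracket is
`[a_λ b] = ∑ₙ (λⁿ/n!) • (a_(n) b)`. -/
structure LieConformalAlgebra (L : Type) [AddCommGroup L] [Module ℂ L] : Type where
  D : L →ₗ[ℂ] L
  prd : ℕ → L →ₗ[ℂ] L →ₗ[ℂ] L
  bound : ∀ a b : L, ∃ N : ℕ, ∀ n : ℕ, N ≤ n → prd n a b = 0
  sesq : ∀ (n : ℕ) (a b : L), prd n (D a) b = (-(n : ℂ)) • prd (n - 1) a b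
  sesq' : ∀ (n : ℕ) (a b : L),
    prd n a (D b) = D (prd n a b) + (n : ℂ) • prd (n - 1) a b
  skew : ∀ (n : ℕ) (a b : L),
    prd n a b
      = - ∑ᶠ j : ℕ, ((-1 : ℂ) ^ (n + j) * ((Nat.factorial j : ℂ))⁻¹) • (⇑D)^[j] (prd (n + j) b a)
  jacobi : ∀ (m n : ℕ) (a b c : L),
    prd m a (prd n b c) - prd n b (prd m a c)
      = ∑ j ∈ Finset.range (m + 1), (Nat.choose m j : ℂ) • prd (m + n - j) (prd j a b) c

namespace LieConformalAlgebra

variable {L : Type} [AddCommGroup L] [Module ℂ L]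

/-- The action of a polynomial `q(∂) ∈ ℂ[∂]` on an element. -/
def applyP (C : LieConformalAlgebra L) (q : Polynomial ℂ) (x : L) : L :=
  q.sum fun k c => c • (⇑C.D)^[k] x

/-- `[a_λ b] = p(∂, λ) • t`, where `p ∈ ℂ[∂][λ]` is a two-variable polynomial
(outer variable `λ`, inner variable `∂`). -/
def BracketEq (C : LieConformalAlgebra L) (a b t : L) (p : Polynomial (Polynomial ℂ)) : Prop :=
  ∀ n : ℕ, C.prd n a b = (Nat.factorial n : ℂ) • C.applyP (p.coeff n) t

def IsSubalgebra (C : LieConformalAlgebra L) (N : Submodule ℂ L) : Prop :=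
  (∀ x ∈ N, C.D x ∈ N) ∧ ∀ n : ℕ, ∀ a ∈ N, ∀ b ∈ N, C.prd n a b ∈ N

def IsIdeal (C : LieConformalAlgebra L) (N : Submodule ℂ L) : Prop :=
  (∀ x ∈ N, C.D x ∈ N) ∧ ∀ (n : ℕ) (a : L), ∀ b ∈ N, C.prd n a b ∈ N

/-- `L` is finitely generated as a Lie conformal algebra (finite type). -/
def FiniteType (C : LieConformalAlgebra L) : Prop :=
  ∃ s : Finset L, ∀ N : Submodule ℂ L, C.IsSubalgebra N → (s : Set L) ⊆ (N : Set L) → N = ⊤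

/-- `L` is finitely generated as a `ℂ[∂]`-module. -/
def FGPolyModule (C : LieConformalAlgebra L) : Prop :=
  ∃ s : Finset L, ∀ N : Submodule ℂ L, (∀ x ∈ N, C.D x ∈ N) → (s : Set L) ⊆ (N : Set L) → N = ⊤

/-- Iterated adjoint action `a₁_(k₁)(a₂_(k₂)(⋯ x))`. -/
def iterPrd (C : LieConformalAlgebra L) : List (L × ℕ) → L → L
  | [], x => x
  | (a, k) :: t, x => C.prd k a (iterPrd C t x)

/-- The `ℂ[∂]`-rank of the submodule `N` is at most `r`:
any `r+1` elements of `N` are `ℂ[∂]`-linearly dependent. -/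
def polyRankLE (C : LieConformalAlgebra L) (N : Submodule ℂ L) (r : ℕ) : Prop :=
  ∀ v : Fin (r + 1) → L, (∀ k, v k ∈ N) →
    ∃ q : Fin (r + 1) → Polynomial ℂ, (∃ k, q k ≠ 0) ∧ ∑ k, C.applyP (q k) (v k) = 0

/-- The family `v` is a free `ℂ[∂]`-basis of `L`. -/
def IsFreePolyBasis (C : LieConformalAlgebra L) {ι : Type} (v : ι → L) : Prop :=
  LinearIndependent ℂ (fun q : ι × ℕ => (⇑C.D)^[q.2] (v q.1)) ∧
  Submodule.span ℂ (Set.range fun q : ι × ℕ => (⇑C.D)^[q.2] (v q.1)) = ⊤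

/-- `[U_λ V]`: the `ℂ`-span of all `u_(n) v`. -/
def bspan (C : LieConformalAlgebra L) (U V : Set L) : Submodule ℂ L :=
  Submodule.span ℂ {x : L | ∃ (n : ℕ) (u : L) (w : L), u ∈ U ∧ w ∈ V ∧ x = C.prd n u w}

end LieConformalAlgebra

/-- `∂` as an element of `ℂ[∂][λ]`. -/
def Pd : Polynomial (Polynomial ℂ) := Polynomial.C Polynomial.X
/-- `λ` as an element of `ℂ[∂][λ]`. -/
def Pl : Polynomial (Polynomial ℂ) := Polynomial.X
/-- a constant in `ℂ[∂][λ]`. -/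
def Pc (a : ℂ) : Polynomial (Polynomial ℂ) := Polynomial.C (Polynomial.C a)

/-- Total degree of a two-variable polynomial in `ℂ[∂][λ]`. -/
def tdeg (p : Polynomial (Polynomial ℂ)) : ℕ :=
  p.support.sup fun n => n + (p.coeff n).natDegree

section ModelPolynomials

/-- structure polynomials of `𝒱(s)` -/
def pV (s : ℂ) (i j : ℤ) : Polynomial (Polynomial ℂ) :=
  Pd + Pc 2 * Pl + Pc (s * ((i : ℂ) - (j : ℂ)))

/-- structure polynomials of `CL₁(s)` -/
def pCL1 (s : ℂ) (i j : ℤ) : Polynomial (Polynomial ℂ) :=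
  Pc ((i : ℂ) + 1) * Pd + Pc ((i : ℂ) + (j : ℂ) + 2) * Pl + Pc (s * ((i : ℂ) - (j : ℂ)))

/-- structure polynomials of `CL₂(b,s)` -/
def pCL2 (b s : ℂ) (i j : ℤ) : Polynomial (Polynomial ℂ) :=
  Pc ((i : ℂ) + b) * Pd + Pc ((i : ℂ) + (j : ℂ) + 2 * b) * Pl + Pc (s * ((i : ℂ) - (j : ℂ)))

/-- structure polynomials of `SCL₂(b,s)` (for `2b ∈ ℤ`), w.r.t. the basis
`L'ᵢ = Lᵢ (i ≠ -2b)`, `L'_{-2b} = (∂+2s)L_{-2b}` of the corresponding graded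
subalgebra of `CL₂(b,s)`. -/
def pSCL2 (b s : ℂ) (i j : ℤ) : Polynomial (Polynomial ℂ) :=
  (if (i : ℂ) = -(2 * b) then Pc (2 * s) - Pl else 1) *
  (if (j : ℂ) = -(2 * b) then Pd + Pl + Pc (2 * s) else 1) *
  (if (i : ℂ) + (j : ℂ) = -(2 * b) then Pc ((i : ℂ) + b) else pCL2 b s i j)

/-- structure polynomials of `CL₃(s)` -/
def pCL3 (s : ℂ) (i j : ℤ) : Polynomial (Polynomial ℂ) :=
  if i + j = 0 then Pc (i : ℂ) * (Pd + Pc s)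
  else if i = 0 then Pc (-(j : ℂ)) * (Pc (2 * s) - Pl)
  else if j = 0 then Pc (i : ℂ) * (Pd + Pl + Pc (2 * s))
  else Pc (i : ℂ) * Pd + Pc ((i : ℂ) + (j : ℂ)) * Pl + Pc (s * ((i : ℂ) - (j : ℂ)))

/-- structure polynomials of `ECL(s)` -/
def pECL (s : ℂ) (i j : ℤ) : Polynomial (Polynomial ℂ) :=
  if i + j = 0 then Pc (i : ℂ) * (Pd + Pc s) * (Pd + Pc (2 * s))
  else if i = 0 then Pc (-(j : ℂ))
  else if j = 0 then Pc (i : ℂ)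
  else Pc (i : ℂ) * Pd + Pc ((i : ℂ) + (j : ℂ)) * Pl + Pc (s * ((i : ℂ) - (j : ℂ)))

/-- structure polynomials of `M(1)` (indices `≥ -1`, completed by skew-symmetry) -/
def pM1 (i j : ℤ) : Polynomial (Polynomial ℂ) :=
  if i = 1 ∧ j = 1 then Pd + Pc 2 * Pl
  else if i = -1 ∧ 1 ≤ j then Pc (((j : ℂ) + 1) * ((j : ℂ) - 2) / 2)
  else if j = -1 ∧ 1 ≤ i then Pc (-(((i : ℂ) + 1) * ((i : ℂ) - 2) / 2))
  else if i = 0 then Pc (-(j : ℂ))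
  else if j = 0 then Pc (i : ℂ)
  else if i = 1 ∧ 2 ≤ j then 1
  else if j = 1 ∧ 2 ≤ i then -1
  else 0

/-- structure polynomials of `M(2)` (completed by skew-symmetry) -/
def pM2 (i j : ℤ) : Polynomial (Polynomial ℂ) :=
  if i = 1 ∧ j = 1 then Pd + Pc 2 * Pl
  else if i = -1 ∧ j = -1 then Pd + Pc 2 * Pl
  else if i = 0 then Pc (-(j : ℂ))
  else if j = 0 then Pc (i : ℂ)
  else if i = -1 ∧ 1 ≤ j then Pc (((j : ℂ) + 1) * ((j : ℂ) - 2) / 2)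
  else if j = -1 ∧ 1 ≤ i then Pc (-(((i : ℂ) + 1) * ((i : ℂ) - 2) / 2))
  else if i = 1 ∧ j ≤ -2 then Pc (((j : ℂ) - 1) * ((j : ℂ) + 2) / 2)
  else if j = 1 ∧ i ≤ -2 then Pc (-(((i : ℂ) - 1) * ((i : ℂ) + 2) / 2))
  else if i = -1 ∧ j ≤ -2 then 1
  else if j = -1 ∧ i ≤ -2 then -1
  else if i = 1 ∧ 2 ≤ j then 1
  else if j = 1 ∧ 2 ≤ i then -1
  else 0

end ModelPolynomials

namespace LieConformalAlgebra

variable {L : Type} [AddCommGroup L] [Module ℂ L]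

/-- `C` is isomorphic to the Virasoro Lie conformal algebra. -/
def IsVir (C : LieConformalAlgebra L) : Prop :=
  ∃ e : L, C.IsFreePolyBasis (fun _ : Unit => e) ∧ C.BracketEq e e e (Pd + Pc 2 * Pl)

/-- `C` is isomorphic to the loop Virasoro Lie conformal algebra `𝒱(s)`. -/
def IsV (C : LieConformalAlgebra L) (s : ℂ) : Prop :=
  ∃ v : ℤ → L, C.IsFreePolyBasis v ∧
    ∀ i j : ℤ, C.BracketEq (v i) (v j) (v (i + j)) (pV s i j)

/-- `C` is isomorphic to `CL₁(s)`. -/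
def IsCL1 (C : LieConformalAlgebra L) (s : ℂ) : Prop :=
  ∃ v : ℤ → L, C.IsFreePolyBasis (fun q : {i : ℤ // -1 ≤ i} => v q.1) ∧
    ∀ i j : ℤ, -1 ≤ i → -1 ≤ j →
      C.BracketEq (v i) (v j) (if -1 ≤ i + j then v (i + j) else 0) (pCL1 s i j)

/-- `C` is isomorphic to `CL₂(b,s)`. -/
def IsCL2 (C : LieConformalAlgebra L) (b s : ℂ) : Prop :=
  ∃ v : ℤ → L, C.IsFreePolyBasis v ∧
    ∀ i j : ℤ, C.BracketEq (v i) (v j) (v (i + j)) (pCL2 b s i j)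

/-- `C` is isomorphic to `SCL₂(b,s)`. -/
def IsSCL2 (C : LieConformalAlgebra L) (b s : ℂ) : Prop :=
  ∃ v : ℤ → L, C.IsFreePolyBasis v ∧
    ∀ i j : ℤ, C.BracketEq (v i) (v j) (v (i + j)) (pSCL2 b s i j)

/-- `C` is isomorphic to `CL₃(s)`. -/
def IsCL3 (C : LieConformalAlgebra L) (s : ℂ) : Prop :=
  ∃ v : ℤ → L, C.IsFreePolyBasis v ∧
    ∀ i j : ℤ, C.BracketEq (v i) (v j) (v (i + j)) (pCL3 s i j)

/-- `C` is isomorphic to `ECL(s)`. -/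
def IsECL (C : LieConformalAlgebra L) (s : ℂ) : Prop :=
  ∃ v : ℤ → L, C.IsFreePolyBasis v ∧
    ∀ i j : ℤ, C.BracketEq (v i) (v j) (v (i + j)) (pECL s i j)

/-- `C` is isomorphic to `M(1)`. -/
def IsM1 (C : LieConformalAlgebra L) : Prop :=
  ∃ v : ℤ → L, C.IsFreePolyBasis (fun q : {i : ℤ // -1 ≤ i} => v q.1) ∧
    ∀ i j : ℤ, -1 ≤ i → -1 ≤ j →
      C.BracketEq (v i) (v j) (if -1 ≤ i + j then v (i + j) else 0) (pM1 i j)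

/-- `C` is isomorphic to `M(2)`. -/
def IsM2 (C : LieConformalAlgebra L) : Prop :=
  ∃ v : ℤ → L, C.IsFreePolyBasis v ∧
    ∀ i j : ℤ, C.BracketEq (v i) (v j) (v (i + j)) (pM2 i j)

/-- `C` is isomorphic to the current Lie conformal algebra `Cur 𝔤`. -/
def IsCur (C : LieConformalAlgebra L) (g : Type) [LieRing g] [LieAlgebra ℂ g] : Prop :=
  ∃ φ : g →ₗ[ℂ] L,
    Function.Bijective (fun f : ℕ →₀ g => f.sum fun k x => (⇑C.D)^[k] (φ x)) ∧
    (∀ x y : g, C.prd 0 (φ x) (φ y) = φ ⁅x, y⁆) ∧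
    ∀ n : ℕ, 1 ≤ n → ∀ x y : g, C.prd n (φ x) (φ y) = 0

/-- `C ≅ Cur sl(2,ℂ)`. -/
def IsCurSl2 (C : LieConformalAlgebra L) : Prop :=
  C.IsCur ↥(LieAlgebra.SpecialLinear.sl (Fin 2) ℂ)

/-- `C ≅ Cur 𝒲`, `𝒲` the Witt algebra (basis `wᵢ`, `[wᵢ,wⱼ] = (j-i)w_{i+j}`). -/
def IsCurWitt (C : LieConformalAlgebra L) : Prop :=
  ∃ v : ℤ → L, C.IsFreePolyBasis v ∧
    (∀ i j : ℤ, C.prd 0 (v i) (v j) = (((j : ℂ) - (i : ℂ))) • v (i + j)) ∧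
    ∀ n : ℕ, 1 ≤ n → ∀ i j : ℤ, C.prd n (v i) (v j) = 0

/-- `C ≅ Cur 𝒲₁`, `𝒲₁` spanned by the `wᵢ`, `i ≥ -1`. -/
def IsCurWitt1 (C : LieConformalAlgebra L) : Prop :=
  ∃ v : ℤ → L, C.IsFreePolyBasis (fun q : {i : ℤ // -1 ≤ i} => v q.1) ∧
    (∀ i j : ℤ, -1 ≤ i → -1 ≤ j →
      C.prd 0 (v i) (v j) = (((j : ℂ) - (i : ℂ))) • (if -1 ≤ i + j then v (i + j) else 0)) ∧
    ∀ n : ℕ, 1 ≤ n → ∀ i j : ℤ, -1 ≤ i → -1 ≤ j → C.prd n (v i) (v j) = 0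

end LieConformalAlgebra

/-- A `ℤ`-graded Lie conformal algebra. -/
structure GradedLCA (L : Type) [AddCommGroup L] [Module ℂ L]
    extends LieConformalAlgebra L where
  G : ℤ → Submodule ℂ L
  internal : DirectSum.IsInternal G
  dGrade : ∀ i : ℤ, ∀ x ∈ G i, D x ∈ G i
  prdGrade : ∀ (i j : ℤ) (n : ℕ), ∀ a ∈ G i, ∀ b ∈ G j, prd n a b ∈ G (i + j)

namespace GradedLCA

variable {L : Type} [AddCommGroup L] [Module ℂ L]

/-- A graded ideal: an ideal generated by homogeneous elements. -/
def IsGradedIdeal (C : GradedLCA L) (N : Submodule ℂ L) : Prop :=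
  C.toLieConformalAlgebra.IsIdeal N ∧ (⨆ i : ℤ, N ⊓ C.G i) = N

/-- `L` is simple graded: nonzero bracket, and the only graded ideals are `⊥` and `⊤`. -/
def IsSimpleGraded (C : GradedLCA L) : Prop :=
  (∃ (n : ℕ) (a b : L), C.prd n a b ≠ 0) ∧
  ∀ N : Submodule ℂ L, C.IsGradedIdeal N → N = ⊥ ∨ N = ⊤

/-- `[L_λ L] = L`. -/
def Perfect (C : GradedLCA L) : Prop :=
  Submodule.span ℂ {x : L | ∃ (n : ℕ) (a b : L), x = C.prd n a b} = ⊤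

/-- Each component `L_i` is a nilpotent `L₀`-module under the adjoint action. -/
def Rootless (C : GradedLCA L) : Prop :=
  ∀ i : ℤ, ∃ n : ℕ, 1 ≤ n ∧ ∀ l : List (L × ℕ), l.length = n →
    (∀ q ∈ l, q.1 ∈ C.G 0) → ∀ x ∈ C.G i, C.toLieConformalAlgebra.iterPrd l x = 0

/-- The ranks of the components are uniformly bounded. -/
def UniformlyBounded (C : GradedLCA L) : Prop :=
  ∃ N : ℕ, 1 ≤ N ∧ ∀ i : ℤ, C.toLieConformalAlgebra.polyRankLE (C.G i) N

end GradedLCA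

/-- A module over a Lie conformal algebra, encoded via the `n`-th actions. -/
structure LCAModule {L : Type} [AddCommGroup L] [Module ℂ L] (C : LieConformalAlgebra L)
    (M : Type) [AddCommGroup M] [Module ℂ M] : Type where
  DM : M →ₗ[ℂ] M
  act : ℕ → L →ₗ[ℂ] M →ₗ[ℂ] M
  bound : ∀ (a : L) (m : M), ∃ N : ℕ, ∀ n : ℕ, N ≤ n → act n a m = 0
  sesq : ∀ (n : ℕ) (a : L) (m : M), act n (C.D a) m = (-(n : ℂ)) • act (n - 1) a m
  sesq' : ∀ (n : ℕ) (a : L) (m : M),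
    act n a (DM m) = DM (act n a m) + (n : ℂ) • act (n - 1) a m
  comm : ∀ (p q : ℕ) (a b : L) (m : M),
    act p a (act q b m) - act q b (act p a m)
      = ∑ j ∈ Finset.range (p + 1), (Nat.choose p j : ℂ) • act (p + q - j) (C.prd j a b) m

namespace LCAModule

variable {L : Type} [AddCommGroup L] [Module ℂ L] {C : LieConformalAlgebra L}
variable {M : Type} [AddCommGroup M] [Module ℂ M]

/-- Iterated action `a₁_(k₁)(a₂_(k₂)(⋯ m))`. -/
def iterAct (ρ : LCAModule C M) : List (L × ℕ) → M → M
  | [], m => m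
  | (a, k) :: t, m => ρ.act k a (iterAct ρ t m)

/-- `N` is an `L`-submodule of `M`. -/
def IsSub (ρ : LCAModule C M) (N : Submodule ℂ M) : Prop :=
  (∀ m ∈ N, ρ.DM m ∈ N) ∧ ∀ (n : ℕ) (a : L), ∀ m ∈ N, ρ.act n a m ∈ N

/-- `M` is a nilpotent module. -/
def Nilpotent (ρ : LCAModule C M) : Prop :=
  ∃ n : ℕ, 1 ≤ n ∧ ∀ l : List (L × ℕ), l.length = n → ∀ m : M, ρ.iterAct l m = 0

/-- `M` is finitely generated as an `L`-module. -/
def FG (ρ : LCAModule C M) : Prop :=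
  ∃ s : Finset M, ∀ N : Submodule ℂ M, ρ.IsSub N → (s : Set M) ⊆ (N : Set M) → N = ⊤

/-- The `L`-submodule `N` is finitely generated as an `L`-module. -/
def FGIn (ρ : LCAModule C M) (N : Submodule ℂ M) : Prop :=
  ∃ s : Finset M, (s : Set M) ⊆ (N : Set M) ∧
    ∀ P : Submodule ℂ M, ρ.IsSub P → (s : Set M) ⊆ (P : Set M) → N ≤ P

/-- `M` is finitely generated as a `ℂ[∂]`-module. -/
def FGPoly (ρ : LCAModule C M) : Prop :=
  ∃ s : Finset M, ∀ N : Submodule ℂ M, (∀ m ∈ N, ρ.DM m ∈ N) → (s : Set M) ⊆ (N : Set M) → N = ⊤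

end LCAModule

/-- A family is `ℂ[∂]`-linearly independent. -/
def polyIndep {M : Type} [AddCommGroup M] [Module ℂ M] (DM : M →ₗ[ℂ] M)
    {r : ℕ} (v : Fin r → M) : Prop :=
  ∀ q : Fin r → Polynomial ℂ,
    (∑ k, (q k).sum fun t c => c • (⇑DM)^[t] (v k)) = 0 → ∀ k, q k = 0

/-- The `ℂ[∂]`-rank of a submodule, in `ℕ∞`. -/
def polyRank {M : Type} [AddCommGroup M] [Module ℂ M] (DM : M →ₗ[ℂ] M)
    (N : Submodule ℂ M) : ℕ∞ :=
  ⨆ r ∈ {r : ℕ | ∃ v : Fin r → M, (∀ k, v k ∈ N) ∧ polyIndep DM v}, (r : ℕ∞)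

/-- A graded module over a `ℤ`-graded Lie conformal algebra. -/
structure GradedLCAModule {L : Type} [AddCommGroup L] [Module ℂ L] (C : GradedLCA L)
    (M : Type) [AddCommGroup M] [Module ℂ M]
    extends LCAModule C.toLieConformalAlgebra M where
  GM : ℤ → Submodule ℂ M
  internal : DirectSum.IsInternal GM
  dGrade : ∀ i : ℤ, ∀ m ∈ GM i, DM m ∈ GM i
  actGrade : ∀ (i j : ℤ) (n : ℕ), ∀ a ∈ C.G i, ∀ m ∈ GM j, act n a m ∈ GM (i + j)

namespace GradedLCAModule

variable {L : Type} [AddCommGroup L] [Module ℂ L] {C : GradedLCA L}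
variable {M : Type} [AddCommGroup M] [Module ℂ M]

/-- `Mⁿ = ⊕_{|i| ≤ n} M_i`. -/
def seg (ρ : GradedLCAModule C M) (n : ℕ) : Submodule ℂ M :=
  ⨆ i : ℤ, ⨆ _ : |i| ≤ (n : ℤ), ρ.GM i

/-- `e(M) = liminf (1/n) rank_{ℂ[∂]} Mⁿ`. -/
def eM (ρ : GradedLCAModule C M) : ℝ≥0∞ :=
  Filter.atTop.liminf fun n : ℕ => (polyRank ρ.DM (ρ.seg n) : ℝ≥0∞) / (n : ℝ≥0∞)

/-- Each `M_i` is a nilpotent `L₀`-module. -/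
def Weightless (ρ : GradedLCAModule C M) : Prop :=
  ∀ i : ℤ, ∃ n : ℕ, 1 ≤ n ∧ ∀ l : List (L × ℕ), l.length = n →
    (∀ q ∈ l, q.1 ∈ C.G 0) → ∀ m ∈ ρ.GM i, ρ.toLCAModule.iterAct l m = 0

/-- The submodule `I(M)` generated by all homogeneous `v` lying in the span of
the iterated actions of `L` on `v`. -/
def IM (ρ : GradedLCAModule C M) : Submodule ℂ M :=
  sInf {N : Submodule ℂ M | ρ.toLCAModule.IsSub N ∧
    {v : M | (∃ i : ℤ, v ∈ ρ.GM i) ∧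
      v ∈ Submodule.span ℂ
        {w : M | ∃ l : List (L × ℕ), 1 ≤ l.length ∧ w = ρ.toLCAModule.iterAct l v}} ⊆ N}

end GradedLCAModule

/-- The structure context for graded Lie conformal algebras all of whose
nonzero components are free of rank one over `ℂ[∂]`: fixed homogeneous bases
`bas i` and structure polynomials `sp i j ∈ ℂ[∂][λ]`, with `0 ∈ Supp(L)` and
`L₀` abelian. -/
structure RankOneContext (L : Type) [AddCommGroup L] [Module ℂ L]
    extends GradedLCA L where
  bas : ℤ → L
  sp : ℤ → ℤ → Polynomial (Polynomial ℂ)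
  bas_mem : ∀ i : ℤ, bas i ∈ G i
  bas_zero : ∀ i : ℤ, G i = ⊥ → bas i = 0
  bas_indep : ∀ i : ℤ, G i ≠ ⊥ → LinearIndependent ℂ fun k : ℕ => (⇑D)^[k] (bas i)
  bas_span : ∀ i : ℤ, G i ≠ ⊥ →
    G i = Submodule.span ℂ (Set.range fun k : ℕ => (⇑D)^[k] (bas i))
  sp_brkt : ∀ (i j : ℤ) (n : ℕ),
    prd n (bas i) (bas j)
      = (Nat.factorial n : ℂ) • (((sp i j).coeff n).sum fun k c => c • (⇑D)^[k] (bas (i + j)))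
  sp_zero : ∀ i j : ℤ, (G i = ⊥ ∨ G j = ⊥ ∨ G (i + j) = ⊥) → sp i j = 0
  supp_zero : G 0 ≠ ⊥
  abelian0 : ∀ n : ℕ, ∀ x ∈ G 0, ∀ y ∈ G 0, prd n x y = 0

/-- A Lie conformal algebra of class `𝒱`. -/
structure ClassV (L : Type) [AddCommGroup L] [Module ℂ L]
    extends RankOneContext L where
  supp_one : G 1 ≠ ⊥
  supp_negone : G (-1) ≠ ⊥
  genV : ∀ N : Submodule ℂ L, (∀ x ∈ N, D x ∈ N) →
    (∀ n : ℕ, ∀ a ∈ N, ∀ b ∈ N, prd n a b ∈ N) →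
    G 1 ≤ N → G 0 ≤ N → G (-1) ≤ N → N = ⊤
  ne_m11 : sp (-1) 1 ≠ 0
  ne_01 : sp 0 1 ≠ 0

/-!
Write `T` for `𝒮` and `P` for `𝒮⊥`, so that `L = T + P`. Since `P` is `∂`-stable, skew-symmetry
turns `[T_λ P] ⊆ P` into `[P_λ T] ⊆ P`. Bracketing `P + [P_λ P]` with `P` therefore gives nothing
new, and bracketing it with `T` is controlled by the Jacobi identity, which says that `T` acts on
`[P_λ P]` by derivations. The ideal so obtained is graded, hence is all of `L` when `L` is simple
graded and `P ≠ 0`. As `[P_λ P]` is graded too and `T ∩ P = 0`, its intersection with `T` must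
then be all of `T`.
-/

namespace LieConformalAlgebra

variable {L : Type} [AddCommGroup L] [Module ℂ L] (C : LieConformalAlgebra L)
variable {U V : Set L} {N : Submodule ℂ L}

theorem prd_mem_bspan (n : ℕ) {u v : L} (hu : u ∈ U) (hv : v ∈ V) :
    C.prd n u v ∈ C.bspan U V :=
  Submodule.subset_span ⟨n, u, v, hu, hv, rfl⟩

theorem bspan_le : C.bspan U V ≤ N ↔ ∀ n, ∀ u ∈ U, ∀ v ∈ V, C.prd n u v ∈ N := by
  refine ⟨fun h n u hu v hv => h (C.prd_mem_bspan n hu hv), fun h => Submodule.span_le.2 ?_⟩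
  rintro _ ⟨n, u, v, hu, hv, rfl⟩
  exact h n u hu v hv

theorem bspan_eq_iSup_map₂ (U V : Set L) :
    C.bspan U V =
      ⨆ n, Submodule.map₂ (C.prd n) (Submodule.span ℂ U) (Submodule.span ℂ V) := by
  simp only [Submodule.map₂_span_span]
  refine le_antisymm (C.bspan_le.2 fun n u hu v hv => ?_) (iSup_le fun n => Submodule.span_le.2 ?_)
  · exact Submodule.mem_iSup_of_mem n (Submodule.subset_span ⟨u, hu, v, hv, rfl⟩)
  · rintro _ ⟨u, hu, v, hv, rfl⟩
    exact C.prd_mem_bspan n hu hv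

theorem bspan_span_span (U V : Set L) :
    C.bspan (Submodule.span ℂ U) (Submodule.span ℂ V) = C.bspan U V := by
  simp only [bspan_eq_iSup_map₂, Submodule.span_eq]

theorem D_mem_bspan (hV : ∀ v ∈ V, C.D v ∈ V) {x : L} (hx : x ∈ C.bspan U V) :
    C.D x ∈ C.bspan U V := by
  suffices C.bspan U V ≤ (C.bspan U V).comap C.D from this hx
  refine C.bspan_le.2 fun n u hu v hv => ?_
  rw [Submodule.mem_comap, ← sub_eq_of_eq_add (C.sesq' n u v)]
  exact sub_mem (C.prd_mem_bspan n hu (hV v hv))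
    (Submodule.smul_mem _ _ (C.prd_mem_bspan (n - 1) hu hv))

theorem prd_mem_bspan_of_mapsTo {a x : L} (hU : ∀ n, ∀ u ∈ U, C.prd n a u ∈ U)
    (hV : ∀ n, ∀ v ∈ V, C.prd n a v ∈ V) (n : ℕ) (hx : x ∈ C.bspan U V) :
    C.prd n a x ∈ C.bspan U V := by
  suffices C.bspan U V ≤ (C.bspan U V).comap (C.prd n a) from this hx
  refine C.bspan_le.2 fun m u hu v hv => ?_
  rw [Submodule.mem_comap, sub_eq_iff_eq_add.1 (C.jacobi n m a u v)]
  exact add_mem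
    (sum_mem fun j _ => Submodule.smul_mem _ _ (C.prd_mem_bspan _ (hU j u hu) hv))
    (C.prd_mem_bspan m hu (hV n v hv))

theorem prd_mem_of_prd_swap_mem (hD : ∀ x ∈ N, C.D x ∈ N) {a b : L}
    (h : ∀ n, C.prd n b a ∈ N) (n : ℕ) : C.prd n a b ∈ N := by
  rw [C.skew n a b]
  refine neg_mem (finsum_induction (· ∈ N) N.zero_mem (fun _ _ => N.add_mem) fun j => ?_)
  exact N.smul_mem _ (Set.MapsTo.iterate (s := (N : Set L)) hD j (h (n + j)))

theorem isIdeal_sup_bspan {T P : Submodule ℂ L} (hTP : T ⊔ P = ⊤) (hD : ∀ x ∈ P, C.D x ∈ P)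
    (hT : ∀ n, ∀ t ∈ T, ∀ p ∈ P, C.prd n t p ∈ P) : C.IsIdeal (P ⊔ C.bspan P P) := by
  have exists_add (x : L) : ∃ t ∈ T, ∃ p ∈ P, t + p = x :=
    Submodule.mem_sup.1 (hTP ▸ Submodule.mem_top)
  refine ⟨fun x hx => ?_, fun n a x hx => ?_⟩
  · obtain ⟨p, hp, y, hy, rfl⟩ := Submodule.mem_sup.1 hx
    rw [map_add]
    exact Submodule.add_mem_sup (hD p hp) (C.D_mem_bspan hD hy)
  · obtain ⟨t, ht, q, hq, rfl⟩ := exists_add a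
    have prd_left_T : C.prd n t x ∈ P ⊔ C.bspan P P := by
      obtain ⟨p, hp, y, hy, rfl⟩ := Submodule.mem_sup.1 hx
      rw [map_add]
      exact Submodule.add_mem_sup (hT n t ht p hp)
        (C.prd_mem_bspan_of_mapsTo (fun m => hT m t ht) (fun m => hT m t ht) n hy)
    have prd_left_P : C.prd n q x ∈ P ⊔ C.bspan P P := by
      obtain ⟨s, hs, p, hp, rfl⟩ := exists_add x
      rw [map_add]
      exact Submodule.add_mem_sup (C.prd_mem_of_prd_swap_mem hD (fun m => hT m s hs q hq) n)
        (C.prd_mem_bspan n hq hp)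
    rw [map_add, LinearMap.add_apply]
    exact add_mem prd_left_T prd_left_P

end LieConformalAlgebra

namespace GradedLCA

variable {L : Type} [AddCommGroup L] [Module ℂ L] (C : GradedLCA L)

/-- The sum `⊕_{i ∈ S} Lᵢ` of the components with degrees in `S`. -/
def supported (S : Set ℤ) : Submodule ℂ L :=
  ⨆ i ∈ S, C.G i

/-- A subspace `N` is homogeneous if it is the sum of the subspaces `N ∩ Lᵢ`; the graded ideals
are the homogeneous ideals. -/
def IsHomogeneous (N : Submodule ℂ L) : Prop :=
  ⨆ i, N ⊓ C.G i = N

variable {C} {S : Set ℤ} {M N : Submodule ℂ L}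

theorem G_le_supported {i : ℤ} (hi : i ∈ S) : C.G i ≤ C.supported S :=
  le_iSup₂_of_le i hi le_rfl

theorem D_mem_supported {x : L} (hx : x ∈ C.supported S) : C.D x ∈ C.supported S := by
  suffices C.supported S ≤ (C.supported S).comap C.D from this hx
  exact iSup₂_le fun i hi y hy => G_le_supported hi (C.dGrade i y hy)

theorem isCompl_supported_compl (C : GradedLCA L) (S : Set ℤ) :
    IsCompl (C.supported S) (C.supported Sᶜ) where
  disjoint := C.internal.submodule_iSupIndep.disjoint_biSup_biSup disjoint_compl_right
  codisjoint := by
    rw [codisjoint_iff_le_sup, ← C.internal.submodule_iSup_eq_top]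
    refine iSup_le fun i => ?_
    by_cases hi : i ∈ S
    · exact (G_le_supported hi).trans le_sup_left
    · exact (G_le_supported hi).trans le_sup_right

/-- The suprema on the left are taken in `Set L`: they are unions of components, not sums. -/
theorem bspan_iSup_eq_bspan_supported (C : GradedLCA L) (S T : Set ℤ) :
    C.bspan (⨆ i ∈ S, (C.G i : Set L)) (⨆ i ∈ T, (C.G i : Set L)) =
      C.bspan (C.supported S) (C.supported T) := by
  simp only [supported, Submodule.iSup_eq_span', C.bspan_span_span, Set.iSup_eq_iUnion]

theorem isHomogeneous_iff_le : C.IsHomogeneous N ↔ N ≤ ⨆ i, N ⊓ C.G i :=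
  ⟨Eq.ge, (iSup_le fun _ => inf_le_left).antisymm⟩

theorem isHomogeneous_supported (C : GradedLCA L) (S : Set ℤ) :
    C.IsHomogeneous (C.supported S) :=
  isHomogeneous_iff_le.2 <| iSup₂_le fun i hi =>
    le_iSup_of_le i (le_inf (G_le_supported hi) le_rfl)

theorem IsHomogeneous.sup (hM : C.IsHomogeneous M) (hN : C.IsHomogeneous N) :
    C.IsHomogeneous (M ⊔ N) :=
  isHomogeneous_iff_le.2 <| sup_le
    (hM.ge.trans (iSup_mono fun _ => inf_le_inf_right _ le_sup_left))
    (hN.ge.trans (iSup_mono fun _ => inf_le_inf_right _ le_sup_right))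

theorem IsHomogeneous.bspan (hM : C.IsHomogeneous M) (hN : C.IsHomogeneous N) :
    C.IsHomogeneous (C.bspan M N) := by
  refine isHomogeneous_iff_le.2 (C.bspan_le.2 fun n => Submodule.map₂_le.1 ?_)
  rw [IsHomogeneous] at hM hN
  calc Submodule.map₂ (C.prd n) M N
      = ⨆ j, ⨆ i, Submodule.map₂ (C.prd n) (M ⊓ C.G i) (N ⊓ C.G j) := by
        simp only [← Submodule.map₂_iSup_left, ← Submodule.map₂_iSup_right, hM, hN]
    _ ≤ ⨆ k, C.bspan M N ⊓ C.G k :=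
        iSup₂_le fun j i => le_iSup_of_le (i + j) <| Submodule.map₂_le.2 fun u hu v hv =>
          ⟨C.prd_mem_bspan n hu.1 hv.1, C.prdGrade i j n u hu.2 v hv.2⟩

theorem IsHomogeneous.le_inf_supported_sup (hN : C.IsHomogeneous N) (S : Set ℤ) :
    N ≤ N ⊓ C.supported S ⊔ C.supported Sᶜ := by
  refine hN.ge.trans (iSup_le fun i => ?_)
  by_cases hi : i ∈ S
  · exact (inf_le_inf_left N (G_le_supported hi)).trans le_sup_left
  · exact inf_le_right.trans ((G_le_supported hi).trans le_sup_right)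

theorem IsHomogeneous.supported_le (hN : C.IsHomogeneous N) (h : C.supported Sᶜ ⊔ N = ⊤) :
    C.supported S ≤ N := by
  have hsup : N ⊓ C.supported S ⊔ C.supported Sᶜ = ⊤ :=
    top_le_iff.1 (h ▸ sup_le le_sup_right (hN.le_inf_supported_sup S))
  refine inf_eq_right.1 (eq_of_le_of_inf_le_of_le_sup inf_le_right ?_ (le_top.trans_eq hsup.symm))
  exact (C.isCompl_supported_compl S).inf_eq_bot.trans_le bot_le

end GradedLCA

/-- for `S ⊆ ℤ`, `𝒮 = ⊕_{i ∈ S} Lᵢ`, `𝒮⊥ = ⊕_{i ∉ S} Lᵢ`, if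
`[𝒮_λ 𝒮⊥] ⊆ 𝒮⊥` then `𝒮⊥ + [𝒮⊥_λ 𝒮⊥]` is an ideal of `L`; if moreover `L` is
simple graded and `𝒮⊥ ≠ 0` then `L = 𝒮⊥ + [𝒮⊥_λ 𝒮⊥]` and `𝒮 ⊆ [𝒮⊥_λ 𝒮⊥]`. -/
theorem orthogonal_complement_ideal
    {L : Type} [AddCommGroup L] [Module ℂ L] (C : GradedLCA L) (S : Set ℤ)
    (hcl : ∀ n : ℕ, ∀ a ∈ (⨆ i ∈ S, C.G i : Submodule ℂ L),
      ∀ b ∈ (⨆ i ∈ Sᶜ, C.G i : Submodule ℂ L),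
        C.prd n a b ∈ (⨆ i ∈ Sᶜ, C.G i : Submodule ℂ L)) :
    C.toLieConformalAlgebra.IsIdeal
      ((⨆ i ∈ Sᶜ, C.G i) ⊔
        C.toLieConformalAlgebra.bspan (⨆ i ∈ Sᶜ, C.G i) (⨆ i ∈ Sᶜ, C.G i)) ∧
    (C.IsSimpleGraded → (⨆ i ∈ Sᶜ, C.G i : Submodule ℂ L) ≠ ⊥ →
      ((⨆ i ∈ Sᶜ, C.G i) ⊔
          C.toLieConformalAlgebra.bspan (⨆ i ∈ Sᶜ, C.G i) (⨆ i ∈ Sᶜ, C.G i) = ⊤ ∧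
        (⨆ i ∈ S, C.G i) ≤
          C.toLieConformalAlgebra.bspan (⨆ i ∈ Sᶜ, C.G i) (⨆ i ∈ Sᶜ, C.G i))) := by
  rw [C.bspan_iSup_eq_bspan_supported]
  have ideal : C.IsIdeal (C.supported Sᶜ ⊔ C.bspan (C.supported Sᶜ) (C.supported Sᶜ)) :=
    C.isIdeal_sup_bspan (C.isCompl_supported_compl S).sup_eq_top
      (fun _ => GradedLCA.D_mem_supported) hcl
  refine ⟨ideal, fun simple ne_bot => ?_⟩
  have homogeneous := C.isHomogeneous_supported Sᶜ
  have eq_top : C.supported Sᶜ ⊔ C.bspan (C.supported Sᶜ) (C.supported Sᶜ) = ⊤ :=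
    (simple.2 _ ⟨ideal, homogeneous.sup (homogeneous.bspan homogeneous)⟩).resolve_left
      fun h => ne_bot (sup_eq_bot_iff.1 h).1
  exact ⟨eq_top, (homogeneous.bspan homogeneous).supported_le eq_top⟩
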